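/- arXiv:2303.03465 — 2 statements merged into one kernel-verified Lean document; each statement's English description precedes it below -/
import Mathlib

section
/- Let n₁, n₂ ≥ 1 and let U be a unitary complex matrix acting on ℂ^{n₁} ⊗ ℂ^{n₂}. Assume that for every finite family (P_x)_{x∈F} of mutually orthogonal orthogonal-projection matrices on ℂ^{n₁} with Σ_{x∈F} P_x = I_{n₁}, and for every density matrix ρ on ℂ^{n₁} ⊗ ℂ^{n₂}, one has Tr₁( Σ_{x∈F} U (P_x ⊗ I_{n₂}) ρ (P_x ⊗ I_{n₂}) U* ) = Tr₁( U ρ U* ). Then there exist unitary matrices U₁ ∈ M_{n₁}(ℂ) and U₂ ∈ M_{n₂}(ℂ) such that U = U₁ ⊗ U₂. (This is the paper's theorem that the measurement-consistency condition (MC) implies the factorization property (F).) -/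
open Matrix Kronecker BigOperators
open scoped ComplexOrder

/-- Partial trace over the first tensor factor:
the unique linear map with `trFst (A ⊗ₖ B) = Tr(A) • B`. -/
noncomputable def trFst {n₁ n₂ : ℕ} (A : Matrix (Fin n₁ × Fin n₂) (Fin n₁ × Fin n₂) ℂ) :
    Matrix (Fin n₂) (Fin n₂) ℂ :=
  fun i j => ∑ k : Fin n₁, A (k, i) (k, j)

lemma mcf_zero_of_trace {n : Type*} [Fintype n] [DecidableEq n] (Y : Matrix n n ℂ)
    (h : ∀ ρ : Matrix n n ℂ, ρ.PosSemidef → (Y * ρ).trace = 0) : Y = 0 := by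
  have h1 : ∀ A : Matrix n n ℂ, (Y * A).trace + (Y * Aᴴ).trace = 0 := by
    intro A
    have a := h _ (Matrix.posSemidef_self_mul_conjTranspose (A + 1))
    have b := h _ (Matrix.posSemidef_self_mul_conjTranspose A)
    have c := h 1 Matrix.PosSemidef.one
    have e : (A + 1) * (A + 1)ᴴ = A * Aᴴ + A + Aᴴ + 1 := by
      rw [conjTranspose_add, conjTranspose_one]; noncomm_ring
    rw [e] at a
    simp only [mul_add, trace_add] at a
    rw [b, c] at a
    simpa using a
  have h2 : ∀ A : Matrix n n ℂ, (Y * A).trace = 0 := by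
    intro A
    have a := h1 A
    have b := h1 (Complex.I • A)
    simp only [conjTranspose_smul, Matrix.mul_smul, trace_smul, smul_eq_mul, Complex.star_def,
      Complex.conj_I] at b
    have c : Complex.I * ((Y * A).trace - (Y * Aᴴ).trace) = 0 := by linear_combination b
    have d := (mul_eq_zero.mp c).resolve_left Complex.I_ne_zero
    linear_combination (a + d) / 2
  exact Matrix.trace_mul_conjTranspose_self_eq_zero_iff.mp (h2 Yᴴ)

lemma mcf_trace_trFst {n₁ n₂ : ℕ} (B : Matrix (Fin n₂) (Fin n₂) ℂ)
    (A : Matrix (Fin n₁ × Fin n₂) (Fin n₁ × Fin n₂) ℂ) :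
    (B * trFst A).trace = (((1 : Matrix (Fin n₁) (Fin n₁) ℂ) ⊗ₖ B) * A).trace := by
  simp only [trace, diag, mul_apply, trFst, Fintype.sum_prod_type, kroneckerMap_apply, one_apply,
    ite_mul, one_mul, zero_mul, Finset.mul_sum]
  simp only [Finset.sum_comm (s := (Finset.univ : Finset (Fin n₁))), Finset.sum_ite_eq,
    Finset.mem_univ, if_true]

lemma mcf_commute {n₁ n₂ : ℕ}
    (U : Matrix (Fin n₁ × Fin n₂) (Fin n₁ × Fin n₂) ℂ)
    (hMC : ∀ (ι : Type) [Fintype ι] (P : ι → Matrix (Fin n₁) (Fin n₁) ℂ),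
      (∀ x, (P x)ᴴ = P x) → (∀ x, P x * P x = P x) →
      (∀ x y, x ≠ y → P x * P y = 0) → (∑ x, P x) = 1 →
      ∀ ρ : Matrix (Fin n₁ × Fin n₂) (Fin n₁ × Fin n₂) ℂ, ρ.PosSemidef → ρ.trace = 1 →
        trFst (∑ x, U * (P x ⊗ₖ (1 : Matrix (Fin n₂) (Fin n₂) ℂ)) * ρ *
            (P x ⊗ₖ (1 : Matrix (Fin n₂) (Fin n₂) ℂ)) * Uᴴ)
          = trFst (U * ρ * Uᴴ))
    (B : Matrix (Fin n₂) (Fin n₂) ℂ) (P : Matrix (Fin n₁) (Fin n₁) ℂ)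
    (hP : Pᴴ = P) (hPP : P * P = P) :
    (P ⊗ₖ (1 : Matrix (Fin n₂) (Fin n₂) ℂ)) * (Uᴴ * ((1 : Matrix (Fin n₁) (Fin n₁) ℂ) ⊗ₖ B) * U)
      = (Uᴴ * ((1 : Matrix (Fin n₁) (Fin n₁) ℂ) ⊗ₖ B) * U) *
        (P ⊗ₖ (1 : Matrix (Fin n₂) (Fin n₂) ℂ)) := by
  have key := hMC Bool (fun b => bif b then P else 1 - P)
    (by rintro (_|_) <;> simp [hP]) (by rintro (_|_) <;> simp [hPP, mul_sub, sub_mul])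
    (by rintro (_|_) (_|_) <;> simp [hPP, mul_sub, sub_mul]) (by simp)
  simp only [Fintype.sum_bool, cond_true, cond_false] at key
  set R := P ⊗ₖ (1 : Matrix (Fin n₂) (Fin n₂) ℂ) with hR
  have hQ : (1 - P) ⊗ₖ (1 : Matrix (Fin n₂) (Fin n₂) ℂ) = 1 - R := by
    have := Matrix.one_kronecker_one (α := ℂ) (m := Fin n₁) (n := Fin n₂)
    rw [hR, ← this]
    ext ⟨a, b⟩ ⟨c, d⟩
    simp only [kroneckerMap_apply, Matrix.sub_apply, sub_mul]
  rw [hQ] at key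
  have hRR : R * R = R := by rw [hR, ← mul_kronecker_mul, hPP, one_mul]
  set K := (1 : Matrix (Fin n₁) (Fin n₁) ℂ) ⊗ₖ B with hK
  set X := Uᴴ * K * U with hX
  have hY : R * X * R + (1 - R) * X * (1 - R) - X = 0 := by
    apply mcf_zero_of_trace
    intro ρ hρ
    have cyc : ∀ S ρ : Matrix (Fin n₁ × Fin n₂) (Fin n₁ × Fin n₂) ℂ,
        (K * (U * S * ρ * S * Uᴴ)).trace = (S * X * S * ρ).trace := by
      intro S ρ
      have : K * (U * S * ρ * S * Uᴴ) = (K * U * S * ρ) * (S * Uᴴ) := by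
        simp only [mul_assoc]
      rw [this, trace_mul_comm, hX]
      simp only [mul_assoc]
    have main : ∀ ρ : Matrix (Fin n₁ × Fin n₂) (Fin n₁ × Fin n₂) ℂ, ρ.PosSemidef →
        ρ.trace = 1 → ((R * X * R + (1 - R) * X * (1 - R) - X) * ρ).trace = 0 := by
      intro ρ h0 h1
      have k := congrArg (fun M => (B * M).trace) (key ρ h0 h1)
      simp only [mcf_trace_trFst, ← hK] at k
      have c1 := cyc 1 ρ
      simp only [mul_one, one_mul] at c1
      rw [mul_add, trace_add, cyc, cyc, c1] at k
      rw [sub_mul, add_mul, trace_sub, trace_add, k, sub_self]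
    by_cases ht : ρ.trace = 0
    · rw [hρ.trace_eq_zero_iff.mp ht]; simp
    · have h0 : (0:ℂ) ≤ (ρ.trace)⁻¹ := by
        have := hρ.trace_nonneg
        exact inv_nonneg.mpr this
      have := main ((ρ.trace)⁻¹ • ρ) (hρ.smul h0) (by simp [ht])
      rw [Matrix.mul_smul, trace_smul, smul_eq_mul] at this
      exact (mul_eq_zero.mp this).resolve_left (inv_ne_zero ht)
  have e1 : R * X * R = R * X := by
    have := congrArg (fun M => R * M) hY
    simp only [mul_sub, mul_add, sub_mul, mul_zero, mul_one, one_mul, ← mul_assoc, hRR] at this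
    rw [← sub_eq_zero, ← this]; abel
  have e2 : R * X * R = X * R := by
    have := congrArg (fun M => M * R) hY
    simp only [mul_sub, add_mul, sub_mul, zero_mul, mul_one, one_mul, mul_assoc, hRR] at this
    rw [← sub_eq_zero, ← this]; simp only [mul_assoc]; abel
  rw [← e1, e2]

/-- `U*(1 ⊗ B)U` has the form `1 ⊗ C`. -/
lemma mcf_form {n₁ n₂ : ℕ} (hn₁ : 1 ≤ n₁)
    (X : Matrix (Fin n₁ × Fin n₂) (Fin n₁ × Fin n₂) ℂ)
    (h : ∀ P : Matrix (Fin n₁) (Fin n₁) ℂ, Pᴴ = P → P * P = P →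
      (P ⊗ₖ (1 : Matrix (Fin n₂) (Fin n₂) ℂ)) * X = X * (P ⊗ₖ (1 : Matrix (Fin n₂) (Fin n₂) ℂ))) :
    ∃ C : Matrix (Fin n₂) (Fin n₂) ℂ, X = (1 : Matrix (Fin n₁) (Fin n₁) ℂ) ⊗ₖ C := by
  have ent : ∀ P : Matrix (Fin n₁) (Fin n₁) ℂ, Pᴴ = P → P * P = P → ∀ i j k l,
      ∑ m, P i m * X (m, j) (k, l) = ∑ m, X (i, j) (m, l) * P m k := by
    intro P h1 h2 i j k l
    have := congrFun (congrFun (h P h1 h2) (i, j)) (k, l)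
    simpa [mul_apply, Fintype.sum_prod_type, kroneckerMap_apply, one_apply] using this
  have off : ∀ i k, i ≠ k → ∀ j l, X (i, j) (k, l) = 0 := by
    intro i k hik j l
    have := ent (Matrix.single i i 1) (by simp) (by simp) i j k l
    simpa [Matrix.single_apply, hik] using this
  have dg : ∀ i k, ∀ j l, X (i, j) (i, l) = X (k, j) (k, l) := by
    intro i k j l
    by_cases hik : i = k
    · rw [hik]
    have hki : k ≠ i := Ne.symm hik
    have := ent ((1/2 : ℂ) • (single i i 1 + single i k 1 + single k i 1 + single k k 1))
      (by simp [conjTranspose_smul]; abel)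
      (by
        simp only [smul_mul_smul_comm, mul_add, add_mul, single_mul_single_same, one_mul,
          single_mul_single_of_ne _ _ _ _ hik, single_mul_single_of_ne _ _ _ _ hki]
        module) i j k l
    rw [Finset.sum_eq_single k, Finset.sum_eq_single i] at this
    · simp [Matrix.single_apply, hik, hki] at this
      linear_combination (-2 : ℂ) * this
    · intro m _ hm; rw [off i m hm.symm]; simp
    · simp
    · intro m _ hm; rw [off m k hm]; simp
    · simp
  refine ⟨Matrix.of fun j l => X (⟨0, hn₁⟩, j) (⟨0, hn₁⟩, l), ?_⟩
  ext ⟨i, j⟩ ⟨k, l⟩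
  by_cases hik : i = k
  · subst hik; simpa [kroneckerMap_apply] using dg i _ j l
  · simp [kroneckerMap_apply, one_apply, hik, off i k hik]

lemma mcf_scalar {n : ℕ} (M : Matrix (Fin n) (Fin n) ℂ)
    (h : ∀ B : Matrix (Fin n) (Fin n) ℂ, B * M = M * B) : ∃ c : ℂ, M = c • 1 := by
  have : M ∈ Set.range (Matrix.scalar (Fin n)) :=
    Matrix.mem_range_scalar_of_commute_single (fun i j _ => h _)
  obtain ⟨c, hc⟩ := this
  exact ⟨c, by rw [← hc, Matrix.scalar_apply, Matrix.smul_one_eq_diagonal]⟩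

/-- (MC) ⇒ (F): if a unitary `U` on `ℂ^{n₁} ⊗ ℂ^{n₂}` is such that, for every ideal
projective (non-selective) measurement on the first factor and every density matrix,
the reduced state of the second subsystem after the evolution `U` is unchanged,
then `U` factorizes as a Kronecker product of unitaries. -/
theorem mc_implies_factorization (n₁ n₂ : ℕ) (hn₁ : 1 ≤ n₁) (hn₂ : 1 ≤ n₂)
    (U : Matrix (Fin n₁ × Fin n₂) (Fin n₁ × Fin n₂) ℂ)
    (hU : U ∈ Matrix.unitaryGroup (Fin n₁ × Fin n₂) ℂ)
    (hMC : ∀ (ι : Type) [Fintype ι] (P : ι → Matrix (Fin n₁) (Fin n₁) ℂ),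
      (∀ x, (P x)ᴴ = P x) → (∀ x, P x * P x = P x) →
      (∀ x y, x ≠ y → P x * P y = 0) → (∑ x, P x) = 1 →
      ∀ ρ : Matrix (Fin n₁ × Fin n₂) (Fin n₁ × Fin n₂) ℂ, ρ.PosSemidef → ρ.trace = 1 →
        trFst (∑ x, U * (P x ⊗ₖ (1 : Matrix (Fin n₂) (Fin n₂) ℂ)) * ρ *
            (P x ⊗ₖ (1 : Matrix (Fin n₂) (Fin n₂) ℂ)) * Uᴴ)
          = trFst (U * ρ * Uᴴ)) :
    ∃ (U₁ : Matrix (Fin n₁) (Fin n₁) ℂ) (U₂ : Matrix (Fin n₂) (Fin n₂) ℂ),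
      U₁ ∈ Matrix.unitaryGroup (Fin n₁) ℂ ∧ U₂ ∈ Matrix.unitaryGroup (Fin n₂) ℂ ∧
      U = U₁ ⊗ₖ U₂ := by
  have hUU : U * Uᴴ = 1 := (Matrix.mem_unitaryGroup_iff).mp hU
  have hU'U : Uᴴ * U = 1 := (Matrix.mem_unitaryGroup_iff').mp hU
  have hform : ∀ B : Matrix (Fin n₂) (Fin n₂) ℂ, ∃ C : Matrix (Fin n₂) (Fin n₂) ℂ,
      Uᴴ * ((1 : Matrix (Fin n₁) (Fin n₁) ℂ) ⊗ₖ B) * U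
        = (1 : Matrix (Fin n₁) (Fin n₁) ℂ) ⊗ₖ C :=
    fun B => mcf_form hn₁ _ (fun P h1 h2 => mcf_commute U hMC B P h1 h2)
  -- blocks
  let b : Fin n₁ → Fin n₁ → Matrix (Fin n₂) (Fin n₂) ℂ :=
    fun i k => Matrix.of fun j l => U (i, j) (k, l)
  have hscal : ∀ i k i' k', ∃ c : ℂ, b i k * (b i' k')ᴴ = c • 1 := by
    intro i k i' k'
    apply mcf_scalar
    intro B
    obtain ⟨C, hC⟩ := hform B
    have hl : ((1 : Matrix (Fin n₁) (Fin n₁) ℂ) ⊗ₖ B) * U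
        = U * ((1 : Matrix (Fin n₁) (Fin n₁) ℂ) ⊗ₖ C) := by
      rw [← hC, ← mul_assoc, ← mul_assoc, hUU, one_mul]
    have hr : Uᴴ * ((1 : Matrix (Fin n₁) (Fin n₁) ℂ) ⊗ₖ B)
        = ((1 : Matrix (Fin n₁) (Fin n₁) ℂ) ⊗ₖ C) * Uᴴ := by
      rw [← hC, mul_assoc _ U, hUU, mul_one]
    have hl' : B * b i k = b i k * C := by
      ext j l
      have := congrFun (congrFun hl (i, j)) (k, l)
      simpa [mul_apply, Fintype.sum_prod_type, kroneckerMap_apply, one_apply, b,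
        Finset.sum_comm (s := (Finset.univ : Finset (Fin n₁)))] using this
    have hr' : (b i' k')ᴴ * B = C * (b i' k')ᴴ := by
      ext j l
      have := congrFun (congrFun hr (k', j)) (i', l)
      simpa [mul_apply, Fintype.sum_prod_type, kroneckerMap_apply, one_apply, b,
        Finset.sum_comm (s := (Finset.univ : Finset (Fin n₁)))] using this
    rw [← mul_assoc, hl', mul_assoc, ← hr', mul_assoc]
  obtain ⟨i₀, k₀, hne⟩ : ∃ i k, b i k ≠ 0 := by
    by_contra! hz
    have : U = 0 := by
      ext ⟨i, j⟩ ⟨k, l⟩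
      exact congrFun (congrFun (hz i k) j) l
    rw [this, zero_mul] at hUU
    have := congrFun (congrFun hUU (⟨0, hn₁⟩, ⟨0, hn₂⟩)) (⟨0, hn₁⟩, ⟨0, hn₂⟩)
    simp at this
  obtain ⟨c, hc⟩ := hscal i₀ k₀ i₀ k₀
  have hc0 : c ≠ 0 := by
    rintro rfl
    rw [zero_smul] at hc
    exact hne (Matrix.self_mul_conjTranspose_eq_zero.mp hc)
  have hcn : 0 ≤ c := by
    have := (Matrix.posSemidef_self_mul_conjTranspose (b i₀ k₀)).diag_nonneg (i := ⟨0, hn₂⟩)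
    rw [hc] at this
    simpa using this
  obtain ⟨r, hr0, rfl⟩ : ∃ r : ℝ, 0 ≤ r ∧ c = (r : ℂ) :=
    ⟨c.re, (Complex.nonneg_iff.mp hcn).1, by
      apply Complex.ext <;> simp [(Complex.nonneg_iff.mp hcn).2.symm]⟩
  have hr1 : (r : ℂ) ≠ 0 := hc0
  set s : ℂ := ((Real.sqrt r : ℝ) : ℂ) with hs
  have hss : s * s = r := by rw [hs, ← Complex.ofReal_mul, Real.mul_self_sqrt hr0]
  have hs0 : s ≠ 0 := by rintro h; rw [h, zero_mul] at hss; exact hr1 hss.symm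
  have hsc : star s = s := by rw [hs]; simp
  let W : Matrix (Fin n₂) (Fin n₂) ℂ := s⁻¹ • b i₀ k₀
  have hWW : W * Wᴴ = 1 := by
    simp only [W, conjTranspose_smul, smul_mul_smul_comm, hc, star_inv₀, hsc, smul_smul]
    rw [← mul_inv, hss, inv_mul_cancel₀ hr1, one_smul]
  have hW'W : Wᴴ * W = 1 := mul_eq_one_comm.mp hWW
  have hsc2 : ∀ i k, ∃ d : ℂ, b i k = d • W := by
    intro i k
    obtain ⟨d, hd⟩ := hscal i k i₀ k₀
    refine ⟨s⁻¹ * d, ?_⟩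
    have : b i k * Wᴴ = (s⁻¹ * d) • 1 := by
      simp only [W, conjTranspose_smul, star_inv₀, hsc, mul_smul_comm, hd, smul_smul]
    calc b i k = b i k * Wᴴ * W := by rw [mul_assoc, hW'W, mul_one]
      _ = _ := by rw [this, smul_mul_assoc, one_mul]
  choose V hV using hsc2
  have hfac : U = (Matrix.of V) ⊗ₖ W := by
    ext ⟨i, j⟩ ⟨k, l⟩
    have := congrFun (congrFun (hV i k) j) l
    simpa [b, kroneckerMap_apply] using this
  refine ⟨Matrix.of V, W, ?_, Matrix.mem_unitaryGroup_iff.mpr hWW, hfac⟩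
  rw [Matrix.mem_unitaryGroup_iff]
  rw [hfac, conjTranspose_kronecker, ← mul_kronecker_mul, hWW] at hUU
  ext i k
  have := congrFun (congrFun hUU (i, ⟨0, hn₂⟩)) (k, ⟨0, hn₂⟩)
  simpa [kroneckerMap_apply, one_apply, star_eq_conjTranspose] using this
end

section
/- Let n₁, n₂ ≥ 1 and let A ∈ M_{n₁}(ℂ), B ∈ M_{n₂}(ℂ) be nonzero matrices such that the Kronecker product A ⊗ B is unitary. Then there exists a nonzero scalar c ∈ ℂ such that c·A and c⁻¹·B are both unitary; in particular there exist unitary matrices U₁ ∈ M_{n₁}(ℂ) and U₂ ∈ M_{n₂}(ℂ) with A ⊗ B = U₁ ⊗ U₂. (The final step of the theorem (MC) ⇒ (F): once the joint evolution operator is shown to be a pure tensor, its factors can be identified with unitary evolution operators of the subsystems.) -/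
open Matrix Kronecker BigOperators

/-- If a Kronecker product `A ⊗ B` of nonzero matrices is unitary, then there is a
nonzero scalar `c` such that `c • A` and `c⁻¹ • B` are unitary; in particular
`A ⊗ B = U₁ ⊗ U₂` for some unitaries `U₁, U₂`. -/
theorem kronecker_unitary_factors (n₁ n₂ : ℕ) (hn₁ : 1 ≤ n₁) (hn₂ : 1 ≤ n₂)
    (A : Matrix (Fin n₁) (Fin n₁) ℂ) (B : Matrix (Fin n₂) (Fin n₂) ℂ)
    (hA : A ≠ 0) (hB : B ≠ 0)
    (hAB : A ⊗ₖ B ∈ Matrix.unitaryGroup (Fin n₁ × Fin n₂) ℂ) :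
    ∃ c : ℂ, c ≠ 0 ∧
      c • A ∈ Matrix.unitaryGroup (Fin n₁) ℂ ∧
      c⁻¹ • B ∈ Matrix.unitaryGroup (Fin n₂) ℂ ∧
      ∃ (U₁ : Matrix (Fin n₁) (Fin n₁) ℂ) (U₂ : Matrix (Fin n₂) (Fin n₂) ℂ),
        U₁ ∈ Matrix.unitaryGroup (Fin n₁) ℂ ∧ U₂ ∈ Matrix.unitaryGroup (Fin n₂) ℂ ∧
        A ⊗ₖ B = U₁ ⊗ₖ U₂ := by
  have hPQ : (A * Aᴴ) ⊗ₖ (B * Bᴴ) = 1 := by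
    rw [Matrix.mul_kronecker_mul, ← Matrix.conjTranspose_kronecker]
    exact Matrix.mem_unitaryGroup_iff.mp hAB
  have hent : ∀ i j k l, (A * Aᴴ) i j * (B * Bᴴ) k l
      = (1 : Matrix (Fin n₁ × Fin n₂) (Fin n₁ × Fin n₂) ℂ) (i, k) (j, l) := by
    intro i j k l
    rw [← hPQ, Matrix.kronecker_apply]
  let a : Fin n₁ := ⟨0, hn₁⟩
  let b : Fin n₂ := ⟨0, hn₂⟩
  obtain ⟨r, hr0, hr⟩ : ∃ r : ℝ, 0 ≤ r ∧ (A * Aᴴ) a a = (r : ℂ) := by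
    refine ⟨∑ j, Complex.normSq (A a j), Finset.sum_nonneg fun j _ => Complex.normSq_nonneg _, ?_⟩
    simp [Matrix.mul_apply, Complex.mul_conj]
  have h1 : (r : ℂ) * (B * Bᴴ) b b = 1 := by
    rw [← hr, hent]; simp
  have hrne : (r : ℂ) ≠ 0 := left_ne_zero_of_mul_eq_one h1
  have hq : (B * Bᴴ) b b = (r : ℂ)⁻¹ := eq_inv_of_mul_eq_one_right h1
  have hQ : (r : ℂ) • (B * Bᴴ) = 1 := by
    ext k l
    have := hent a a k l
    rw [hr] at this
    rw [Matrix.smul_apply, smul_eq_mul, this]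
    simp [Matrix.one_apply]
  have hP : (r : ℂ)⁻¹ • (A * Aᴴ) = 1 := by
    ext i j
    have := hent i j b b
    rw [hq] at this
    rw [Matrix.smul_apply, smul_eq_mul, mul_comm, this]
    simp [Matrix.one_apply]
  have hs : ((Real.sqrt r : ℝ) : ℂ) * ((Real.sqrt r : ℝ) : ℂ) = r := by
    rw [← Complex.ofReal_mul, Real.mul_self_sqrt hr0]
  have hsne : ((Real.sqrt r : ℝ) : ℂ) ≠ 0 := by
    intro h
    rw [h] at hs
    exact hrne (by simpa using hs.symm)
  have hU : ((Real.sqrt r : ℝ) : ℂ)⁻¹ • A ∈ Matrix.unitaryGroup (Fin n₁) ℂ := by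
    rw [Matrix.mem_unitaryGroup_iff, star_smul, Matrix.smul_mul, Matrix.mul_smul, smul_smul,
      Matrix.star_eq_conjTranspose, ← hP, ← hs, mul_inv]
    simp
  have hV : ((Real.sqrt r : ℝ) : ℂ) • B ∈ Matrix.unitaryGroup (Fin n₂) ℂ := by
    rw [Matrix.mem_unitaryGroup_iff, star_smul, Matrix.smul_mul, Matrix.mul_smul, smul_smul,
      Matrix.star_eq_conjTranspose, ← hQ, ← hs]
    simp
  refine ⟨((Real.sqrt r : ℝ) : ℂ)⁻¹, inv_ne_zero hsne, hU, by rwa [inv_inv], _, _, hU, hV, ?_⟩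
  rw [Matrix.smul_kronecker, Matrix.kronecker_smul, smul_smul, inv_mul_cancel₀ hsne, one_smul]
end
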